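/- arXiv:2207.10419 — 2 statements merged into one kernel-verified Lean document; each statement's English description precedes it below -/
import Mathlib

section
/- Let f ∈ S₀^ev. Then ℰf is smooth on (0,∞) and belongs to the strong Schwartz space of ℝ₊*: for every β ∈ ℝ, the function t ↦ e^{βt}·(ℰf)(e^t) is a Schwartz function on ℝ. In particular, for every N ∈ ℕ, (ℰf)(u) = O(u^N) as u → 0⁺ and (ℰf)(u) = O(u^{−N}) as u → ∞. -/
/-! The space `S₀^ev` is stable under `f ↦ c f + x f'`, and `t ↦ e^{ct} ∑_{n ≥ 1} f(n e^t)` has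
derivative `t ↦ e^{ct} ∑_{n ≥ 1} (c f + x f')(n e^t)` (`hasDerivAt_expSum`). So every derivative of
a function of this shape is again of this shape, and it suffices to bound
`e^{ct} ∑_{n ≥ 1} f(n e^t)` on `ℝ` for each `f ∈ S₀^ev` and each real `c` (`expSum_bounded`);
replacing `c` by `c ± 1` then gives exponential decay at both ends (`expSum_decay`).

For `t ≥ 0` the bound is the rapid decay of `f`. For `t ≤ 0`, Poisson summation, whose zeroth terms
vanish on both sides because `f(0) = ∫ f = 0`, gives
`∑_{n ≥ 1} f(nu) = u⁻¹ ∑_{n ≥ 1} 𝓕f(n/u)` (`posSum_poisson`), and the rapid decay of `𝓕f` applies.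

The theorem is the case `c = β + 1/2`; smoothness and the `O`-estimates on `(0, ∞)` follow by
substituting `t = log u`. -/

open MeasureTheory Set Filter Asymptotics

/-- `(ℰ f)(u) = u^{1/2} ∑_{n ≥ 1} f(n u)`. -/
noncomputable def Emap (f : ℝ → ℂ) (u : ℝ) : ℂ :=
  (u : ℂ) ^ ((1 : ℂ)/2) * ∑' n : ℕ, f ((n + 1) * u)

open scoped SchwartzMap FourierTransform

/-- Membership in `S₀^ev`: even, with vanishing value at `0` and vanishing integral. -/
structure IsS0ev (f : 𝓢(ℝ, ℂ)) : Prop where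
  even : ∀ x : ℝ, f (-x) = f x
  zero : f 0 = 0
  integral : ∫ x : ℝ, f x = 0

/-- The sum `∑_{n ≥ 1} f(nu)`, indexed from `0`. -/
noncomputable def posSum (f : 𝓢(ℝ, ℂ)) (u : ℝ) : ℂ := ∑' n : ℕ, f ((n + 1) * u)

/-- The function `c f + x f'`. -/
noncomputable def eulerOp (c : ℝ) (f : 𝓢(ℝ, ℂ)) : 𝓢(ℝ, ℂ) :=
  (c : ℂ) • f + SchwartzMap.smulLeftCLM ℂ (fun x : ℝ => x) (SchwartzMap.derivCLM ℝ ℂ f)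

lemma eulerOp_apply (c : ℝ) (f : 𝓢(ℝ, ℂ)) (x : ℝ) :
    eulerOp c f x = c * f x + x * deriv f x := by
  simp [eulerOp, SchwartzMap.smulLeftCLM_apply_apply Function.HasTemperateGrowth.id']

lemma IsS0ev.eulerOp {f : 𝓢(ℝ, ℂ)} (hf : IsS0ev f) (c : ℝ) : IsS0ev (eulerOp c f) where
  even x := by
    have h : deriv f (-x) = -deriv f x := by
      have h1 := deriv_comp_neg (f := f) x
      simp only [hf.even] at h1
      simp [h1]
    simp [eulerOp_apply, hf.even, h]
  zero := by simp [eulerOp_apply, hf.zero]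
  integral := by
    -- `x f' = (x f)' - f`, and both `(x f)'` and `f` integrate to zero.
    let g : 𝓢(ℝ, ℂ) := SchwartzMap.smulLeftCLM ℂ (fun x : ℝ => x) f
    have hg : ∀ x, g x = x * f x := fun x => by
      simp [g, SchwartzMap.smulLeftCLM_apply_apply Function.HasTemperateGrowth.id']
    have hd : ∀ x, deriv g x = f x + x * deriv f x := fun x => by
      have h1 : HasDerivAt (fun x : ℝ => (x : ℂ) * f x) (1 * f x + x * deriv f x) x :=
        (Complex.ofRealCLM.hasDerivAt (x := x)).mul (f.hasDerivAt x)
      rw [show (g : ℝ → ℂ) = fun x : ℝ => (x : ℂ) * f x from funext hg, h1.deriv, one_mul]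
    have hgi : Integrable fun x => deriv g x := (SchwartzMap.derivCLM ℝ ℂ g).integrable
    have hi : ∫ x, deriv g x = 0 :=
      integral_eq_zero_of_hasDerivAt_of_integrable (fun x => g.hasDerivAt x) hgi g.integrable
    have h2 : ∀ x, _root_.eulerOp c f x = ((c : ℂ) - 1) * f x + deriv g x := fun x => by
      rw [eulerOp_apply, hd]; ring
    simp_rw [h2]
    rw [integral_add (f.integrable.const_mul _) hgi, hi, integral_const_mul, hf.integral]
    simp

lemma summable_succ_pow {k : ℕ} (hk : 2 ≤ k) : Summable fun n : ℕ => (((n : ℝ) + 1) ^ k)⁻¹ := by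
  have := (summable_nat_add_iff 1).2 (Real.summable_nat_pow_inv (p := k).2 (by omega))
  simpa using this

/-- Rapid decay of the terms of `posSum f u`. -/
lemma exists_term_bound (f : 𝓢(ℝ, ℂ)) (k : ℕ) : ∃ C : ℝ, 0 < C ∧ ∀ (u : ℝ), 0 < u → ∀ n : ℕ,
    ‖f ((n + 1) * u)‖ ≤ C * (u ^ k)⁻¹ * (((n : ℝ) + 1) ^ k)⁻¹ := by
  obtain ⟨C, hC, h⟩ := f.decay k 0
  refine ⟨C, hC, fun u hu n => ?_⟩
  have h1 := h ((n + 1) * u)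
  have hp : (0 : ℝ) < (n + 1) * u := by positivity
  rw [norm_iteratedFDeriv_zero, Real.norm_of_nonneg hp.le, mul_pow] at h1
  have : C * (u ^ k)⁻¹ * (((n : ℝ) + 1) ^ k)⁻¹ = C / (((n : ℝ) + 1) ^ k * u ^ k) := by
    field_simp
  rw [this, le_div_iff₀ (by positivity)]
  linarith

lemma summable_posSum (f : 𝓢(ℝ, ℂ)) {u : ℝ} (hu : 0 < u) :
    Summable fun n : ℕ => f ((n + 1) * u) := by
  obtain ⟨C, -, h⟩ := exists_term_bound f 2
  exact .of_norm_bounded ((summable_succ_pow le_rfl).mul_left _) (h u hu)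

lemma posSum_bound (f : 𝓢(ℝ, ℂ)) {k : ℕ} (hk : 2 ≤ k) :
    ∃ C : ℝ, 0 ≤ C ∧ ∀ u : ℝ, 0 < u → ‖posSum f u‖ ≤ C * (u ^ k)⁻¹ := by
  obtain ⟨C, hC, h⟩ := exists_term_bound f k
  refine ⟨C * ∑' n : ℕ, (((n : ℝ) + 1) ^ k)⁻¹,
    mul_nonneg hC.le (tsum_nonneg fun n => by positivity), fun u hu => ?_⟩
  refine (tsum_of_norm_bounded ((summable_succ_pow hk).mul_left _).hasSum (h u hu)).trans_eq ?_
  rw [tsum_mul_left]; ring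

lemma tsum_int_eq_two_mul_posSum (g : 𝓢(ℝ, ℂ)) (hev : ∀ x, g (-x) = g x) (h0 : g 0 = 0) :
    ∑' n : ℤ, g n = 2 * posSum g 1 := by
  have hs : Summable fun n : ℤ => g n :=
    summable_of_isBigO (Real.summable_abs_int_rpow one_lt_two)
      ((g.isBigO_cocompact_rpow (-2)).comp_tendsto Int.tendsto_coe_cofinite)
  rw [tsum_int_eq_zero_add_two_mul_tsum_pnat (fun n => by simp [hev]) hs]
  have := tsum_pnat_eq_tsum_succ (f := fun n : ℕ => g (n : ℝ))
  simp only [Int.cast_natCast, Int.cast_zero, h0, zero_add, posSum, mul_one]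
  simpa using this

/-- Poisson summation for the dilate `x ↦ f(ux)`. -/
lemma posSum_poisson {f : 𝓢(ℝ, ℂ)} (hf : IsS0ev f) {u : ℝ} (hu : 0 < u) :
    posSum f u = (u : ℂ)⁻¹ * posSum (𝓕 f) u⁻¹ := by
  let g : 𝓢(ℝ, ℂ) := SchwartzMap.compCLMOfContinuousLinearEquiv ℂ
    (ContinuousLinearEquiv.unitsEquivAut ℝ (Units.mk0 u hu.ne')) f
  have hg : ∀ x, g x = f (x * u) := fun x => rfl
  have hFg : ∀ w, 𝓕 g w = (u : ℂ)⁻¹ * 𝓕 f (w * u⁻¹) := fun w => by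
    rw [SchwartzMap.fourier_coe, SchwartzMap.fourier_coe, Real.fourier_real_eq,
      Real.fourier_real_eq]
    have := Measure.integral_comp_mul_right
      (fun v : ℝ => Real.fourierChar (-(v * (w * u⁻¹))) • f v) u
    rw [abs_of_pos (inv_pos.2 hu), Complex.real_smul, Complex.ofReal_inv] at this
    rw [← this]
    congr 1 with v
    rw [hg]
    congr 3
    field_simp
  have hFev : ∀ w, 𝓕 f (-w) = 𝓕 f w := fun w => by
    rw [SchwartzMap.fourier_coe, Real.fourier_real_eq, Real.fourier_real_eq,
      ← integral_neg_eq_self]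
    simp [hf.even]
  have hF0 : 𝓕 f 0 = 0 := by
    rw [SchwartzMap.fourier_coe, Real.fourier_real_eq]
    simpa using hf.integral
  have hP := SchwartzMap.tsum_eq_tsum_fourier g 0
  simp only [zero_add, QuotientAddGroup.mk_zero, fourier_eval_zero, mul_one] at hP
  rw [tsum_int_eq_two_mul_posSum g (fun x => by simp [hg, hf.even]) (by simp [hg, hf.zero]),
    tsum_int_eq_two_mul_posSum (𝓕 g) (fun x => by simp [hFg, hFev]) (by simp [hFg, hF0])] at hP
  have hP' := mul_left_cancel₀ two_ne_zero hP
  simpa [posSum, hg, hFg, tsum_mul_left] using hP'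

/-- The function `t ↦ e^{ct} ∑_{n ≥ 1} f(n e^t)`. -/
noncomputable def expSum (c : ℝ) (f : 𝓢(ℝ, ℂ)) (t : ℝ) : ℂ :=
  Real.exp (c * t) * posSum f (Real.exp t)

lemma expSum_bounded {f : 𝓢(ℝ, ℂ)} (hf : IsS0ev f) (c : ℝ) :
    ∃ C : ℝ, ∀ t, ‖expSum c f t‖ ≤ C := by
  -- The exponent `k` has to beat `e^{ct}` on both sides; one unit is lost to the factor `u⁻¹`
  -- of Poisson summation.
  obtain ⟨k, hk⟩ := exists_nat_ge (2 + |c|)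
  have hk2 : 2 ≤ k := by
    have : (2 : ℝ) ≤ k := by linarith [abs_nonneg c]
    exact_mod_cast this
  obtain ⟨C₁, hC₁, h₁⟩ := posSum_bound f hk2
  obtain ⟨C₂, hC₂, h₂⟩ := posSum_bound (𝓕 f) hk2
  refine ⟨C₁ + C₂, fun t => ?_⟩
  have hnorm : ‖expSum c f t‖ = Real.exp (c * t) * ‖posSum f (Real.exp t)‖ := by
    rw [expSum, norm_mul, Complex.norm_real, Real.norm_of_nonneg (Real.exp_pos _).le]
  rw [hnorm]
  rcases le_total 0 t with ht | ht
  · calc _ ≤ Real.exp (c * t) * (C₁ * (Real.exp t ^ k)⁻¹) := by gcongr; exact h₁ _ (Real.exp_pos t)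
      _ = C₁ * Real.exp ((c - k) * t) := by
        rw [← Real.exp_nat_mul, ← Real.exp_neg, mul_left_comm, ← Real.exp_add]; ring_nf
      _ ≤ C₁ * 1 := by
        gcongr
        exact Real.exp_le_one_iff.2
          (mul_nonpos_of_nonpos_of_nonneg (by linarith [le_abs_self c]) ht)
      _ ≤ _ := by linarith
  · rw [posSum_poisson hf (Real.exp_pos t), norm_mul, norm_inv, Complex.norm_real,
      Real.norm_of_nonneg (Real.exp_pos _).le, ← Real.exp_neg t]
    calc _ ≤ Real.exp (c * t) * (Real.exp (-t) * (C₂ * (Real.exp (-t) ^ k)⁻¹)) := by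
          gcongr; exact h₂ _ (Real.exp_pos _)
      _ = C₂ * Real.exp ((c - 1 + k) * t) := by
        rw [← Real.exp_nat_mul, ← Real.exp_neg, mul_left_comm _ C₂, mul_left_comm _ C₂,
          ← Real.exp_add, ← Real.exp_add]; ring_nf
      _ ≤ C₂ * 1 := by
        gcongr
        exact Real.exp_le_one_iff.2
          (mul_nonpos_of_nonneg_of_nonpos (by linarith [neg_abs_le c]) ht)
      _ ≤ _ := by linarith

lemma hasDerivAt_posSum_exp (f : 𝓢(ℝ, ℂ)) (t : ℝ) :
    HasDerivAt (fun t => posSum f (Real.exp t)) (posSum (eulerOp 0 f) (Real.exp t)) t := by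
  obtain ⟨C, hC, h⟩ := exists_term_bound (eulerOp 0 f) 2
  -- On the half-line `(t - 1, ∞)` the differentiated series is dominated by its bound at `t - 1`.
  refine hasDerivAt_tsum_of_isPreconnected (t := Ioi (t - 1)) (y₀ := t)
    (u := fun n : ℕ => C * (Real.exp (t - 1) ^ 2)⁻¹ * (((n : ℝ) + 1) ^ 2)⁻¹)
    (g := fun n t => f ((n + 1) * Real.exp t))
    (g' := fun n t => eulerOp 0 f ((n + 1) * Real.exp t))
    ((summable_succ_pow le_rfl).mul_left _) isOpen_Ioi isPreconnected_Ioi ?_ ?_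
    (by simp) (summable_posSum f (Real.exp_pos t)) (by simp)
  · intro n y _
    have h1 := (f.hasDerivAt ((n + 1) * Real.exp y)).scomp y
      ((Real.hasDerivAt_exp y).const_mul ((n : ℝ) + 1))
    simpa [eulerOp_apply, Function.comp_def] using h1
  · intro n y hy
    refine (h _ (Real.exp_pos y) n).trans ?_
    have : Real.exp (t - 1) ≤ Real.exp y := Real.exp_le_exp.2 (le_of_lt hy)
    gcongr

lemma hasDerivAt_expSum (c : ℝ) (f : 𝓢(ℝ, ℂ)) (t : ℝ) :
    HasDerivAt (expSum c f) (expSum c (eulerOp c f) t) t := by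
  have h1 : HasDerivAt (fun t : ℝ => ((Real.exp (c * t) : ℝ) : ℂ))
      ((Real.exp (c * t) * c : ℝ) : ℂ) t := by
    simpa using (((hasDerivAt_id t).const_mul c).exp).ofReal_comp
  have h2 := h1.mul (hasDerivAt_posSum_exp f t)
  have h3 : posSum (eulerOp c f) (Real.exp t)
      = c * posSum f (Real.exp t) + posSum (eulerOp 0 f) (Real.exp t) := by
    simp only [posSum]
    rw [← tsum_mul_left, ← ((summable_posSum f (Real.exp_pos t)).mul_left _).tsum_add
      (summable_posSum (eulerOp 0 f) (Real.exp_pos t))]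
    simp [eulerOp_apply]
  refine h2.congr_deriv ?_
  rw [expSum, h3]
  push_cast
  ring

lemma iteratedDeriv_expSum (c : ℝ) (f : 𝓢(ℝ, ℂ)) (n : ℕ) :
    iteratedDeriv n (expSum c f) = expSum c ((eulerOp c)^[n] f) := by
  induction n with
  | zero => simp
  | succ n ih =>
    rw [iteratedDeriv_succ, ih, Function.iterate_succ_apply']
    exact funext fun t => (hasDerivAt_expSum c _ t).deriv

lemma expSum_decay {f : 𝓢(ℝ, ℂ)} (hf : IsS0ev f) (c : ℝ) (k : ℕ) :
    ∃ C : ℝ, ∀ t, ‖t‖ ^ k * ‖expSum c f t‖ ≤ C := by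
  obtain ⟨C₁, h₁⟩ := expSum_bounded hf (c + 1)
  obtain ⟨C₂, h₂⟩ := expSum_bounded hf (c - 1)
  refine ⟨k.factorial * (C₁ + C₂), fun t => ?_⟩
  have hpow : ‖t‖ ^ k ≤ k.factorial * (Real.exp t + Real.exp (-t)) := by
    have h := Real.pow_div_factorial_le_exp |t| (abs_nonneg t) k
    rw [div_le_iff₀ (by positivity)] at h
    have h' : Real.exp |t| ≤ Real.exp t + Real.exp (-t) := by
      rcases abs_choice t with h | h <;> rw [h] <;> linarith [Real.exp_pos t, Real.exp_pos (-t)]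
    rw [Real.norm_eq_abs]
    calc _ ≤ _ := h
      _ ≤ _ := by rw [mul_comm]; gcongr
  have hs : ∀ d : ℝ, Real.exp (d * t) * ‖expSum c f t‖ = ‖expSum (c + d) f t‖ := fun d => by
    simp only [expSum, norm_mul, Complex.norm_real, Real.norm_of_nonneg (Real.exp_pos _).le]
    rw [← mul_assoc, ← Real.exp_add]
    ring_nf
  have e1 := hs 1
  have e2 := hs (-1)
  rw [one_mul] at e1
  rw [neg_one_mul, ← sub_eq_add_neg] at e2
  calc _ ≤ k.factorial * (Real.exp t + Real.exp (-t)) * ‖expSum c f t‖ := by gcongr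
    _ = k.factorial * (‖expSum (c + 1) f t‖ + ‖expSum (c - 1) f t‖) := by rw [← e1, ← e2]; ring
    _ ≤ _ := by gcongr; exacts [h₁ t, h₂ t]

/-- `expSum c f` as a Schwartz function. -/
noncomputable def expSumSchwartz {f : 𝓢(ℝ, ℂ)} (hf : IsS0ev f) (c : ℝ) : 𝓢(ℝ, ℂ) where
  toFun := expSum c f
  smooth' := contDiff_of_differentiable_iteratedDeriv fun n _ t => by
    rw [iteratedDeriv_expSum]
    exact (hasDerivAt_expSum c _ t).differentiableAt
  decay' k n := by
    have hn : IsS0ev ((eulerOp c)^[n] f) := by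
      induction n with
      | zero => exact hf
      | succ n ih => rw [Function.iterate_succ_apply']; exact ih.eulerOp c
    simp_rw [norm_iteratedFDeriv_eq_norm_iteratedDeriv, iteratedDeriv_expSum]
    exact expSum_decay hn c k

lemma expSumSchwartz_apply {f : 𝓢(ℝ, ℂ)} (hf : IsS0ev f) (β t : ℝ) :
    expSumSchwartz hf (β + 1 / 2) t = Real.exp (β * t) * Emap (⇑f) (Real.exp t) := by
  have h : ((Real.exp t : ℝ) : ℂ) ^ ((1 : ℂ) / 2) = ((Real.exp (1 / 2 * t) : ℝ) : ℂ) := by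
    rw [mul_comm, Real.exp_mul, Complex.ofReal_cpow (Real.exp_pos t).le]
    norm_num
  change expSum (β + 1 / 2) f t = _
  rw [expSum, Emap, h, ← mul_assoc, ← Complex.ofReal_mul, ← Real.exp_add, ← add_mul, posSum]

/-- The polynomial estimates at `0` and at `∞` are instances of this bound on all of `(0, ∞)`. -/
lemma Emap_bound {f : 𝓢(ℝ, ℂ)} (hf : IsS0ev f) (m : ℤ) :
    ∃ C : ℝ, ∀ u : ℝ, 0 < u → ‖Emap (⇑f) u‖ ≤ C * ‖u ^ m‖ := by
  obtain ⟨C, -, hC⟩ := (expSumSchwartz hf (-(m : ℝ) + 1 / 2)).decay 0 0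
  refine ⟨C, fun u hu => ?_⟩
  have h := hC (Real.log u)
  have hexp : Real.exp (-(m : ℝ) * Real.log u) = (u ^ m)⁻¹ := by
    rw [neg_mul, Real.exp_neg, mul_comm, ← Real.rpow_def_of_pos hu, Real.rpow_intCast]
  rw [pow_zero, one_mul, norm_iteratedFDeriv_zero, expSumSchwartz_apply, Real.exp_log hu, hexp,
    norm_mul, Complex.norm_real, norm_inv, inv_mul_le_iff₀ (norm_pos_iff.2 (by positivity))] at h
  linarith

theorem stmt14 (f : SchwartzMap ℝ ℂ) (hev : ∀ x : ℝ, f (-x) = f x)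
    (h0 : f 0 = 0) (hint : ∫ x : ℝ, f x = 0) :
    ContDiffOn ℝ (⊤ : ℕ∞) (Emap (⇑f)) (Ioi 0) ∧
    (∀ β : ℝ, ∃ F : SchwartzMap ℝ ℂ,
      ∀ t : ℝ, F t = Real.exp (β * t) * Emap (⇑f) (Real.exp t)) ∧
    (∀ N : ℕ, (Emap (⇑f)) =O[nhdsWithin 0 (Ioi 0)] fun u : ℝ => u ^ N) ∧
    (∀ N : ℕ, (Emap (⇑f)) =O[atTop] fun u : ℝ => u ^ (-(N:ℤ))) := by
  have hf : IsS0ev f := ⟨hev, h0, hint⟩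
  refine ⟨?_, fun β => ⟨expSumSchwartz hf (β + 1 / 2), expSumSchwartz_apply hf β⟩,
    fun N => ?_, fun N => ?_⟩
  · have hlog : ContDiffOn ℝ (⊤ : ℕ∞) Real.log (Ioi 0) :=
      Real.contDiffOn_log.mono fun x hx => ne_of_gt hx
    refine (((expSumSchwartz hf (0 + 1 / 2)).smooth ⊤).comp_contDiffOn hlog).congr fun u hu => ?_
    rw [Function.comp_apply, expSumSchwartz_apply, Real.exp_log hu]
    simp
  · obtain ⟨C, hC⟩ := Emap_bound hf N
    refine IsBigO.of_bound C ?_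
    filter_upwards [self_mem_nhdsWithin] with u hu
    simpa using hC u hu
  · obtain ⟨C, hC⟩ := Emap_bound hf (-(N : ℤ))
    refine IsBigO.of_bound C ?_
    filter_upwards [eventually_gt_atTop 0] with u hu
    exact hC u hu
end

section
/- Let f ∈ S₀^ev, let L > 0, μ = e^L, and n ∈ ℤ. Then ∫_1^μ (Σ_μ(ℰf))(u) u^{−2πin/L} d*u = ζ(1/2 − 2πin/L) · ψ_f(2πn/L). -/
/-!
Put `G(u) = ∑_{m ≥ 1} f(m u)` and `s = 1/2 - 2πin/L`. The integral over `(1, μ]` of the periodized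
function unfolds to an integral over `(0, ∞)`, because `u^{-2πin/L}` is invariant under `u ↦ μ u`;
the result is the Mellin transform of `G` at `s` (`integral_Ioi_unfold`).

The unfolding and the evaluation of this Mellin transform rest on two bounds: `G(u) = O(u^{-2})`
from the Schwartz decay of `f`, and `G(u) = O(u)` from Poisson summation, where `f(0) = 0` and
`∫ f = 0` remove the zero modes (`dilSum_bound`, `dilSum_bound_zero`). Hence the Mellin transform of
`G` is holomorphic on `0 < Re s < 2`. For `1 < Re s < 2` summing term by term gives
`ζ(s) · mellin f s` (`mellin_dilSum_of_one_lt`), and the identity theorem extends this to the line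
`Re s = 1/2` (`mellin_dilSum`).
-/

open MeasureTheory Set

/-- `(Σ_μ g)(u) = ∑_{k ∈ ℤ} g(μ^k u)`. -/
noncomputable def SigmaMu (μ : ℝ) (g : ℝ → ℂ) (u : ℝ) : ℂ :=
  ∑' k : ℤ, g (μ ^ k * u)

/-- `ψ_f(z) = ∫₀^∞ f(u) u^{1/2 - iz} du/u`. -/
noncomputable def psi (f : ℝ → ℂ) (z : ℂ) : ℂ :=
  ∫ u in Ioi (0:ℝ), f u * (u : ℂ) ^ ((1 : ℂ)/2 - Complex.I * z) / (u : ℂ)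

open Filter Topology Asymptotics FourierTransform

/-- The sum `∑_{m ≥ 1} f(m u)` over the positive dilates, so that `ℰ f (u) = u^{1/2} · dilSum f u`. -/
noncomputable def dilSum (f : ℝ → ℂ) (u : ℝ) : ℂ := ∑' n : ℕ, f ((n + 1) * u)

/-! ### Bounds for the sum over dilates -/

lemma summable_inv_succ_sq : Summable fun n : ℕ => (((n : ℝ) + 1) ^ 2)⁻¹ := by
  have := (summable_nat_add_iff 1).2 (Real.summable_nat_pow_inv.2 one_lt_two)
  simpa using this

lemma schwartz_term_bound (f : SchwartzMap ℝ ℂ) : ∃ C : ℝ, 0 < C ∧ ∀ u : ℝ, 0 < u → ∀ n : ℕ,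
    ‖f ((n + 1) * u)‖ ≤ C * (u ^ 2)⁻¹ * (((n : ℝ) + 1) ^ 2)⁻¹ := by
  obtain ⟨C, hC, h⟩ := f.decay 2 0
  refine ⟨C, hC, fun u hu n => ?_⟩
  have h1 := h ((n + 1) * u)
  rw [norm_iteratedFDeriv_zero, Real.norm_eq_abs, sq_abs, mul_pow] at h1
  have : (0 : ℝ) < ((n : ℝ) + 1) ^ 2 := by positivity
  have hu2 : 0 < u ^ 2 := by positivity
  rw [mul_assoc, ← mul_inv, ← div_eq_mul_inv, le_div_iff₀ (by positivity)]
  nlinarith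

lemma summable_dil (f : SchwartzMap ℝ ℂ) {u : ℝ} (hu : 0 < u) :
    Summable fun n : ℕ => f ((n + 1) * u) := by
  obtain ⟨C, -, h⟩ := schwartz_term_bound f
  exact Summable.of_norm_bounded (summable_inv_succ_sq.mul_left _) (h u hu)

lemma dilSum_bound (f : SchwartzMap ℝ ℂ) :
    ∃ C : ℝ, 0 < C ∧ ∀ u : ℝ, 0 < u → ‖dilSum f u‖ ≤ C * (u ^ 2)⁻¹ := by
  obtain ⟨C, hC, h⟩ := schwartz_term_bound f
  refine ⟨C * ∑' n : ℕ, (((n : ℝ) + 1) ^ 2)⁻¹,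
    mul_pos hC (summable_inv_succ_sq.tsum_pos (fun n => by positivity) 0 (by positivity)),
    fun u hu => ?_⟩
  have := tsum_of_norm_bounded (summable_inv_succ_sq.hasSum.mul_left (C * (u ^ 2)⁻¹)) (h u hu)
  calc _ ≤ _ := this
    _ = _ := by ring

lemma continuousOn_dilSum (f : SchwartzMap ℝ ℂ) : ContinuousOn (dilSum f) (Ioi 0) := by
  obtain ⟨C, hC, h⟩ := schwartz_term_bound f
  intro x hx
  have hx : 0 < x := hx
  have : ContinuousOn (dilSum f) (Ioi (x / 2)) := by
    refine continuousOn_tsum (u := fun n : ℕ => C * ((x / 2) ^ 2)⁻¹ * (((n : ℝ) + 1) ^ 2)⁻¹)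
      (fun n => ?_) (summable_inv_succ_sq.mul_left _) (fun n y hy => ?_)
    · exact (f.continuous.comp (by fun_prop)).continuousOn
    · have hy : x / 2 < y := hy
      refine (h y (by linarith) n).trans ?_
      gcongr
  exact (this.continuousAt (Ioi_mem_nhds (by linarith))).continuousWithinAt

/-- Poisson summation, rescaled by `u`: it is applied to the Schwartz function `x ↦ f (x u)`. -/
lemma tsum_dilation_eq (f : SchwartzMap ℝ ℂ) {u : ℝ} (hu : 0 < u) :
    ∑' n : ℤ, f (n * u) = (u : ℂ)⁻¹ * ∑' n : ℤ, 𝓕 f (n * u⁻¹) := by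
  let g : SchwartzMap ℝ ℂ := SchwartzMap.compCLMOfContinuousLinearEquiv ℂ
    (ContinuousLinearEquiv.unitsEquivAut ℝ (Units.mk0 u hu.ne')) f
  have hg : ∀ x, g x = f (x * u) := fun x => by
    simp [g, ContinuousLinearEquiv.unitsEquivAut]
  have hF : ∀ w, 𝓕 g w = (u : ℂ)⁻¹ * 𝓕 f (w * u⁻¹) := fun w => by
    rw [SchwartzMap.fourier_coe, SchwartzMap.fourier_coe, Real.fourier_real_eq,
      Real.fourier_real_eq]
    have := Measure.integral_comp_mul_right
      (fun v => Real.fourierChar (-(v * (w * u⁻¹))) • f v) u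
    rw [abs_of_pos (inv_pos.2 hu)] at this
    rw [← Complex.ofReal_inv, ← Complex.real_smul, ← this]
    congr 1; ext v
    rw [hg]
    congr 3
    field_simp
  have := g.tsum_eq_tsum_fourier 0
  simpa [hg, hF, tsum_mul_left] using this

lemma tsum_int_eq_dilSum (f : SchwartzMap ℝ ℂ) (hev : ∀ x : ℝ, f (-x) = f x) (h0 : f 0 = 0)
    {u : ℝ} (hu : 0 < u) : ∑' n : ℤ, f (n * u) = 2 * dilSum f u := by
  have hs := summable_dil f hu
  rw [tsum_of_add_one_of_neg_add_one (f := fun n : ℤ => f (n * u))]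
  · have : ∀ n : ℕ, f ((-((n : ℝ) + 1)) * u) = f ((n + 1) * u) := fun n => by
      rw [neg_mul, hev]
    simp only [Int.cast_neg, Int.cast_add, Int.cast_natCast, Int.cast_one, Int.cast_zero, this,
      zero_mul, h0, dilSum]
    ring
  · simpa using hs
  · refine hs.congr fun n => ?_
    rw [← hev]; congr 1; push_cast; ring

/-- The vanishing of `f` and of its Fourier transform at `0` removes both zero modes from the Poisson
formula, leaving `dilSum f u = u⁻¹ · dilSum (𝓕 f) u⁻¹`. The decay of `dilSum (𝓕 f)` at infinity
then controls `dilSum f` near `0`. -/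
lemma dilSum_bound_zero (f : SchwartzMap ℝ ℂ) (hev : ∀ x : ℝ, f (-x) = f x)
    (h0 : f 0 = 0) (hint : ∫ x : ℝ, f x = 0) :
    ∃ C : ℝ, 0 < C ∧ ∀ u : ℝ, 0 < u → ‖dilSum f u‖ ≤ C * u := by
  have hFev : ∀ x : ℝ, 𝓕 f (-x) = 𝓕 f x := fun x => by
    rw [SchwartzMap.fourier_coe, ← Real.fourierInv_eq_fourier_neg,
      Real.fourierInv_eq_fourier_comp_neg]
    simp only [hev]
  have hF0 : 𝓕 f 0 = 0 := by
    rw [SchwartzMap.fourier_coe, Real.fourier_real_eq]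
    simpa using hint
  obtain ⟨C, hC, h⟩ := dilSum_bound (𝓕 f)
  refine ⟨C, hC, fun u hu => ?_⟩
  have key : dilSum f u = (u : ℂ)⁻¹ * dilSum (𝓕 f : SchwartzMap ℝ ℂ) u⁻¹ := by
    have := tsum_dilation_eq f hu
    rw [tsum_int_eq_dilSum f hev h0 hu, tsum_int_eq_dilSum (𝓕 f) hFev hF0 (inv_pos.2 hu)] at this
    linear_combination this / 2
  rw [key, norm_mul, norm_inv, Complex.norm_real, Real.norm_of_nonneg hu.le]
  calc _ ≤ u⁻¹ * (C * (u⁻¹ ^ 2)⁻¹) := by gcongr; exact h _ (inv_pos.2 hu)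
    _ = _ := by field_simp

/-! ### Mellin transforms on the strip `0 < Re s < 2` -/

lemma dilSum_isBigO_top (f : SchwartzMap ℝ ℂ) : dilSum f =O[atTop] (· ^ (-2 : ℝ)) := by
  obtain ⟨C, hC, h⟩ := dilSum_bound f
  refine IsBigO.of_bound C ?_
  filter_upwards [eventually_gt_atTop 0] with u hu
  refine (h u hu).trans ?_
  rw [Real.norm_of_nonneg (by positivity), Real.rpow_neg hu.le]
  norm_cast

lemma isBigO_zero {g : ℝ → ℂ} (C : ℝ) (h : ∀ u : ℝ, 0 < u → u < 1 → ‖g u‖ ≤ C) :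
    g =O[𝓝[>] 0] (· ^ (-0 : ℝ)) := by
  refine IsBigO.of_bound C ?_
  filter_upwards [Ioo_mem_nhdsGT (zero_lt_one' ℝ)] with u hu
  simpa using h u hu.1 hu.2

lemma schwartz_isBigO_top (f : SchwartzMap ℝ ℂ) : f =O[atTop] (· ^ (-2 : ℝ)) := by
  refine ((f.isBigO_cocompact_rpow (-2)).mono atTop_le_cocompact).trans ?_
  refine IsBigO.of_bound 1 ?_
  filter_upwards [eventually_gt_atTop 0] with u hu
  rw [Real.norm_of_nonneg hu.le, one_mul]

lemma schwartz_isBigO_zero (f : SchwartzMap ℝ ℂ) : f =O[𝓝[>] 0] (· ^ (-0 : ℝ)) := by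
  obtain ⟨C, hC, h⟩ := f.decay 0 0
  exact isBigO_zero C fun u _ _ => by simpa using h u

lemma mellinConvergent_schwartz (f : SchwartzMap ℝ ℂ) {s : ℂ} (h0 : 0 < s.re) (h2 : s.re < 2) :
    MellinConvergent f s :=
  mellinConvergent_of_isBigO_rpow (f.continuous.locallyIntegrable.locallyIntegrableOn _)
    (schwartz_isBigO_top f) h2 (schwartz_isBigO_zero f) h0

/-- In the range of absolute convergence the sum and the Mellin integral may be interchanged, and
the dilation by `m` contributes the factor `m^{-s}`. -/
lemma mellin_dilSum_of_one_lt (f : SchwartzMap ℝ ℂ) {s : ℂ} (h1 : 1 < s.re) (h2 : s.re < 2) :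
    mellin (dilSum f) s = riemannZeta s * mellin f s := by
  have hconv := mellinConvergent_schwartz f (by linarith) h2
  have hpos : ∀ n : ℕ, (0 : ℝ) < n + 1 := fun n => by positivity
  have hF : ∀ n : ℕ, MellinConvergent (fun t => f (((n : ℝ) + 1) * t)) s := fun n =>
    (MellinConvergent.comp_mul_left (hpos n)).2 hconv
  have hnorm : ∀ n : ℕ, ∫ t in Ioi (0 : ℝ), ‖(t : ℂ) ^ (s - 1) • f (((n : ℝ) + 1) * t)‖
      = (1 / ((n : ℝ) + 1) ^ s.re) * ∫ t in Ioi (0 : ℝ), ‖(t : ℂ) ^ (s - 1) • f t‖ := fun n => by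
    have h := integral_comp_mul_left_Ioi (fun t : ℝ => ‖(t : ℂ) ^ (s - 1) • f t‖) 0 (hpos n)
    rw [mul_zero] at h
    rw [show 1 / ((n : ℝ) + 1) ^ s.re = ((n : ℝ) + 1) ^ (1 - s.re) * ((n : ℝ) + 1)⁻¹ by
      rw [Real.rpow_sub (hpos n), Real.rpow_one]; field_simp, mul_assoc,
      ← smul_eq_mul _ (∫ _ in _, _), ← h, ← integral_const_mul]
    refine setIntegral_congr_fun measurableSet_Ioi fun t ht => ?_
    have ht : 0 < t := ht
    simp only [norm_smul]
    rw [Complex.norm_cpow_eq_rpow_re_of_pos ht, Complex.norm_cpow_eq_rpow_re_of_pos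
      (mul_pos (hpos n) ht), Real.mul_rpow (hpos n).le ht.le, ← mul_assoc, ← mul_assoc,
      ← Real.rpow_add (hpos n)]
    simp
  have hsum := hasSum_integral_of_summable_integral_norm
    (μ := volume.restrict (Ioi (0 : ℝ)))
    (F := fun (n : ℕ) (t : ℝ) => (t : ℂ) ^ (s - 1) • f (((n : ℝ) + 1) * t)) hF (by
      simp_rw [hnorm]
      refine Summable.mul_right _ ?_
      have := (summable_nat_add_iff 1).2 (Real.summable_one_div_nat_rpow.2 h1)
      simpa using this)
  have hL : mellin (dilSum f) s
      = ∫ t in Ioi (0 : ℝ), ∑' n : ℕ, (t : ℂ) ^ (s - 1) • f (((n : ℝ) + 1) * t) := by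
    refine setIntegral_congr_fun measurableSet_Ioi fun t ht => ?_
    simp only [dilSum, smul_eq_mul, tsum_mul_left]
  rw [hL, ← hsum.tsum_eq, zeta_eq_tsum_one_div_nat_add_one_cpow h1, ← tsum_mul_right]
  refine tsum_congr fun n => ?_
  have := mellin_comp_mul_left f s (hpos n)
  rw [mellin] at this
  rw [this, smul_eq_mul, Complex.cpow_neg]
  simp

/-- Removing the pole of `ζ` at `1`, where the residue is `1`, gives an entire function. -/
lemma differentiable_sub_one_mul_zeta :
    Differentiable ℂ (Function.update (fun s => (s - 1) * riemannZeta s) 1 1) := by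
  have h : DifferentiableOn ℂ (Function.update (fun s => (s - 1) * riemannZeta s) 1 1) univ := by
    rw [← Complex.differentiableOn_compl_singleton_and_continuousAt_iff (c := 1) univ_mem]
    refine ⟨?_, ?_⟩
    · intro s hs
      have hs1 : s ≠ 1 := hs.2
      refine DifferentiableAt.differentiableWithinAt ?_
      have : DifferentiableAt ℂ (fun s => (s - 1) * riemannZeta s) s :=
        (differentiableAt_id.sub_const 1).mul (differentiableAt_riemannZeta hs1)
      refine this.congr_of_eventuallyEq ?_
      filter_upwards [isOpen_ne.mem_nhds hs1] with z hz
      exact Function.update_of_ne hz _ _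
    · rw [continuousAt_update_same]
      exact riemannZeta_residue_one
  exact differentiableOn_univ.1 h

lemma dilSum_isBigO_zero (f : SchwartzMap ℝ ℂ) (hev : ∀ x : ℝ, f (-x) = f x)
    (h0 : f 0 = 0) (hint : ∫ x : ℝ, f x = 0) :
    dilSum f =O[𝓝[>] 0] (· ^ (-0 : ℝ)) := by
  obtain ⟨C, hC, h⟩ := dilSum_bound_zero f hev h0 hint
  exact isBigO_zero C fun u hu hu1 => (h u hu).trans (by nlinarith)

lemma mellinConvergent_dilSum (f : SchwartzMap ℝ ℂ) (hev : ∀ x : ℝ, f (-x) = f x)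
    (h0 : f 0 = 0) (hint : ∫ x : ℝ, f x = 0)
    {s : ℂ} (hs0 : 0 < s.re) (hs2 : s.re < 2) :
    MellinConvergent (dilSum f) s :=
  mellinConvergent_of_isBigO_rpow
    ((continuousOn_dilSum f).locallyIntegrableOn measurableSet_Ioi)
    (dilSum_isBigO_top f) hs2 (dilSum_isBigO_zero f hev h0 hint) hs0

/-- Analytic continuation of `mellin_dilSum_of_one_lt` to the strip `0 < Re s < 2`. Both sides are
multiplied by `s - 1`, so that the identity theorem applies on the whole (convex) strip. -/
lemma mellin_dilSum (f : SchwartzMap ℝ ℂ) (hev : ∀ x : ℝ, f (-x) = f x)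
    (h0 : f 0 = 0) (hint : ∫ x : ℝ, f x = 0)
    {s : ℂ} (hs0 : 0 < s.re) (hs2 : s.re < 2) (hs1 : s ≠ 1) :
    mellin (dilSum f) s = riemannZeta s * mellin f s := by
  let U : Set ℂ := {z | 0 < z.re ∧ z.re < 2}
  have hUo : IsOpen U := (isOpen_lt continuous_const Complex.continuous_re).inter
    (isOpen_lt Complex.continuous_re continuous_const)
  have hUc : IsPreconnected U := ((convex_halfSpace_re_gt 0).inter
    (convex_halfSpace_re_lt 2)).isPreconnected
  have hA : DifferentiableOn ℂ (fun z => (z - 1) * mellin (dilSum f) z) U := fun z hz =>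
    ((differentiableAt_id.sub_const 1).mul (mellin_differentiableAt_of_isBigO_rpow
      ((continuousOn_dilSum f).locallyIntegrableOn measurableSet_Ioi)
      (dilSum_isBigO_top f) hz.2 (dilSum_isBigO_zero f hev h0 hint) hz.1)).differentiableWithinAt
  have hB : DifferentiableOn ℂ (fun z =>
      Function.update (fun s => (s - 1) * riemannZeta s) 1 1 z * mellin f z) U := fun z hz =>
    ((differentiable_sub_one_mul_zeta z).mul (mellin_differentiableAt_of_isBigO_rpow
      (f.continuous.locallyIntegrable.locallyIntegrableOn _)
      (schwartz_isBigO_top f) hz.2 (schwartz_isBigO_zero f) hz.1)).differentiableWithinAt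
  have hz₀ : (3 / 2 : ℂ).re = 3 / 2 := by norm_num
  have hev1 : (fun z => (z - 1) * mellin (dilSum f) z) =ᶠ[𝓝 (3 / 2 : ℂ)] (fun z =>
      Function.update (fun s => (s - 1) * riemannZeta s) 1 1 z * mellin f z) := by
    have h1 : ∀ᶠ z : ℂ in 𝓝 (3 / 2), 1 < z.re :=
      Complex.continuous_re.continuousAt.eventually (lt_mem_nhds (by rw [hz₀]; norm_num))
    have h2 : ∀ᶠ z : ℂ in 𝓝 (3 / 2), z.re < 2 :=
      Complex.continuous_re.continuousAt.eventually (gt_mem_nhds (by rw [hz₀]; norm_num))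
    filter_upwards [h1, h2] with z hz1 hz2
    have : z ≠ 1 := by rintro rfl; simp at hz1
    rw [Function.update_of_ne this, mellin_dilSum_of_one_lt f hz1 hz2, mul_assoc]
  have := (hA.analyticOnNhd hUo).eqOn_of_preconnected_of_eventuallyEq (hB.analyticOnNhd hUo) hUc
    (z₀ := 3 / 2) ⟨by rw [hz₀]; norm_num, by rw [hz₀]; norm_num⟩ hev1 ⟨hs0, hs2⟩
  simp only [Function.update_of_ne hs1] at this
  rw [mul_assoc] at this
  exact mul_left_cancel₀ (sub_ne_zero.2 hs1) this

/-! ### Unfolding -/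

/-- The intervals `(μ^k, μ^{k+1}]`, `k ∈ ℤ`, tile `(0, ∞)`; each is rescaled to `(1, μ]`. -/
lemma integral_Ioi_unfold {μ : ℝ} (hμ : 1 < μ) {H : ℝ → ℂ} (hH : IntegrableOn H (Ioi 0)) :
    ∫ u in Ioc 1 μ, ∑' k : ℤ, ((μ ^ k : ℝ) : ℂ) * H (μ ^ k * u) = ∫ u in Ioi 0, H u := by
  have hμ0 : 0 < μ := by linarith
  have hk : ∀ k : ℤ, 0 < μ ^ k := fun k => zpow_pos hμ0 k
  have hU : ⋃ k : ℤ, Ioc (μ ^ k) (μ ^ (k + 1)) = Ioi 0 := by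
    ext x
    simp only [mem_iUnion, mem_Ioi]
    exact ⟨fun ⟨k, h⟩ => (hk k).trans h.1, fun h => exists_mem_Ioc_zpow h hμ⟩
  have hd : Pairwise (Function.onFun Disjoint fun k : ℤ => Ioc (μ ^ k) (μ ^ (k + 1))) :=
    (zpow_right_strictMono₀ hμ).monotone.pairwise_disjoint_on_Ioc_succ
  have hscale : ∀ {E : Type} [NormedAddCommGroup E] [NormedSpace ℝ E] (F : ℝ → E) (k : ℤ),
      (μ ^ k) • ∫ u in Ioc 1 μ, F (μ ^ k * u) = ∫ u in Ioc (μ ^ k) (μ ^ (k + 1)), F u := by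
    intro E _ _ F k
    have := intervalIntegral.smul_integral_comp_mul_left (a := 1) (b := μ) (f := F) (μ ^ k)
    rw [mul_one, ← zpow_add_one₀ hμ0.ne', intervalIntegral.integral_of_le hμ.le,
      intervalIntegral.integral_of_le (zpow_le_zpow_right₀ hμ.le (by lia))] at this
    exact this
  have hs := hasSum_integral_iUnion (fun k : ℤ => measurableSet_Ioc) hd (hU ▸ hH)
  have hsn := hasSum_integral_iUnion (fun k : ℤ => measurableSet_Ioc) hd (hU ▸ hH.norm)
  rw [hU] at hs
  have hint : ∀ k : ℤ, IntegrableOn (fun u => ((μ ^ k : ℝ) : ℂ) * H (μ ^ k * u)) (Ioc 1 μ) := by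
    intro k
    have := (integrableOn_Ioi_comp_mul_left_iff H 0 (hk k)).2 (by simpa using hH)
    exact (this.mono_set fun u hu => zero_lt_one.trans hu.1).const_mul _
  have key := hasSum_integral_of_summable_integral_norm hint (by
    refine hsn.summable.congr fun k => ?_
    rw [← hscale (fun u => ‖H u‖) k, smul_eq_mul, ← integral_const_mul]
    simp only [norm_mul, Complex.norm_real, Real.norm_of_nonneg (hk k).le])
  refine key.unique (hs.congr_fun fun k => ?_)
  rw [← hscale H k, Complex.real_smul, ← integral_const_mul]

theorem stmt17 (f : SchwartzMap ℝ ℂ) (hev : ∀ x : ℝ, f (-x) = f x)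
    (h0 : f 0 = 0) (hint : ∫ x : ℝ, f x = 0)
    (L : ℝ) (hL : 0 < L) (μ : ℝ) (hμ : μ = Real.exp L) (n : ℤ) :
    ∫ u in Ioc (1:ℝ) μ,
        SigmaMu μ (Emap (⇑f)) u *
          (u : ℂ) ^ (-(2 * (Real.pi : ℂ) * Complex.I * (n : ℂ) / (L : ℂ))) / (u : ℂ)
      = riemannZeta (1/2 - 2 * (Real.pi : ℂ) * Complex.I * (n : ℂ) / (L : ℂ)) *
        psi (⇑f) ((2 * Real.pi * (n : ℝ) / L : ℝ) : ℂ) := by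
  have hLc : (L : ℂ) ≠ 0 := by exact_mod_cast hL.ne'
  have hμ1 : 1 < μ := hμ ▸ Real.one_lt_exp_iff.2 hL
  have hμ0 : 0 < μ := by linarith
  set w : ℂ := 2 * (Real.pi : ℂ) * Complex.I * (n : ℂ) / (L : ℂ) with hw
  have hwI : w = ((2 * Real.pi * (n : ℝ) / L : ℝ) : ℂ) * Complex.I := by
    rw [hw]; push_cast; ring
  have hre : (1 / 2 - w : ℂ).re = 1 / 2 := by
    rw [Complex.sub_re, hwI, Complex.re_ofReal_mul, Complex.I_re]; norm_num
  have hs1 : (1 / 2 - w : ℂ) ≠ 1 := fun h => by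
    rw [h] at hre; norm_num at hre
  have hpsi : psi f ((2 * Real.pi * (n : ℝ) / L : ℝ) : ℂ) = mellin f (1 / 2 - w) := by
    refine setIntegral_congr_fun measurableSet_Ioi fun u hu => ?_
    have hu0 : (u : ℂ) ≠ 0 := by exact_mod_cast (ne_of_gt hu)
    simp only [smul_eq_mul]
    rw [mul_comm Complex.I, ← hwI, Complex.cpow_sub (1 / 2 - w) 1 hu0, Complex.cpow_one]
    ring
  rw [hpsi, ← mellin_dilSum f hev h0 hint (by rw [hre]; norm_num) (by rw [hre]; norm_num) hs1,
    mellin, ← integral_Ioi_unfold hμ1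
      (mellinConvergent_dilSum f hev h0 hint (by rw [hre]; norm_num) (by rw [hre]; norm_num))]
  refine setIntegral_congr_fun measurableSet_Ioc fun u hu => ?_
  have hu0 : 0 < u := zero_lt_one.trans hu.1
  have huc : (u : ℂ) ≠ 0 := by exact_mod_cast hu0.ne'
  simp only [SigmaMu]
  rw [mul_div_assoc, ← tsum_mul_right]
  refine tsum_congr fun k => ?_
  have hk : 0 < μ ^ k := zpow_pos hμ0 k
  have hkc : ((μ ^ k : ℝ) : ℂ) ≠ 0 := by exact_mod_cast hk.ne'
  -- The twist is invariant under `u ↦ μ u`: `(μ^k)^{-w} = exp (-2 π i n k) = 1`.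
  have hper : ((μ ^ k : ℝ) : ℂ) ^ (-w) = 1 := by
    rw [Complex.cpow_def_of_ne_zero hkc, ← Complex.ofReal_log hk.le, Real.log_zpow, hμ,
      Real.log_exp, Complex.exp_eq_one_iff]
    refine ⟨-(k * n), ?_⟩
    rw [hw]; push_cast; field_simp
  have hsplit : ((μ ^ k * u : ℝ) : ℂ) ^ (-w) = (u : ℂ) ^ (-w) := by
    rw [Complex.ofReal_mul, Complex.mul_cpow_ofReal_nonneg hk.le hu0.le, hper, one_mul]
  have hvc : ((μ ^ k * u : ℝ) : ℂ) ≠ 0 := by exact_mod_cast (mul_pos hk hu0).ne'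
  rw [show (1 / 2 - w - 1 : ℂ) = 1 / 2 + -w - 1 by ring, Complex.cpow_sub _ _ hvc,
    Complex.cpow_add _ _ hvc, hsplit, Complex.cpow_one, Emap, ← dilSum, smul_eq_mul]
  generalize ((μ ^ k * u : ℝ) : ℂ) ^ (1 / 2 : ℂ) = a
  rw [Complex.ofReal_mul]
  field_simp
end
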